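/- Fix E > 0 and let V ∈ L^∞(ℝ^n) be continuous with max V = 0. The Γ(L²)-limit J̄ of the Jacobi energies J_E^ε[γ] = ∫_0^1 2(E − V(γ/ε))‖γ'‖² ds (as ε → 0) has integrand j̄ : ℝ^n → ℝ satisfying the bounds 2E‖z‖² ≤ j̄(z) ≤ 2(E − min V)‖z‖² for all z ∈ ℝ^n, and j̄ is convex and 2-homogeneous. -/

import Mathlib

open Real intervalIntegral Filter

/-!
For a conformal factor `0 ≤ m ≤ f ≤ M` on a normed space, put `d(p, q) = √(inf energy)`. A path
from `p` to `q` can be slowed down near its ends at arbitrarily small cost, so paths can be glued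
without losing `C¹` regularity; giving the two pieces times proportional to their lengths shows that
`d` satisfies the triangle inequality.

By scaling, the least energy from `0` to `z` for `x ↦ f (ε⁻¹ • x)` is `(ε * d(0, ε⁻¹ • z))²`, so
`√(j̄ z)` is the stable norm `lim ε * d(0, ε⁻¹ • z)`. The periods of `f` form a net of bounded mesh,
hence `d(0, ·)` is subadditive up to a constant, and its stable norm is sublinear. Its square `j̄`
is therefore convex and 2-homogeneous.
-/

section StableNorm

open Set Topology

variable {X : Type*} [AddCommGroup X] [Module ℝ X] {g N : X → ℝ}

lemma rescaledLimit_smul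
    (hN : ∀ z, Tendsto (fun ε : ℝ => ε * g (ε⁻¹ • z)) (𝓝[>] 0) (𝓝 (N z)))
    {c : ℝ} (hc : 0 ≤ c) (z : X) : N (c • z) = c * N z := by
  have hid : Tendsto (fun ε : ℝ => ε) (𝓝[>] 0) (𝓝 0) := nhdsWithin_le_nhds
  rcases hc.eq_or_lt with rfl | hc
  · have h0 : Tendsto (fun ε : ℝ => ε * g (ε⁻¹ • (0 : X))) (𝓝[>] 0) (𝓝 0) := by
      simpa using hid.mul_const (g 0)
    simpa using tendsto_nhds_unique (hN 0) h0
  · have hdiv : Tendsto (fun ε : ℝ => ε / c) (𝓝[>] 0) (𝓝[>] 0) := by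
      refine tendsto_nhdsWithin_iff.2 ⟨by simpa using hid.div_const c, ?_⟩
      filter_upwards [self_mem_nhdsWithin] with ε hε using div_pos hε hc
    refine tendsto_nhds_unique (hN (c • z)) ((((hN z).comp hdiv).const_mul c).congr fun ε => ?_)
    rw [Function.comp_apply, inv_div, ← mul_assoc, mul_div_cancel₀ _ hc.ne', smul_smul,
      div_eq_inv_mul]

lemma rescaledLimit_add_le {C : ℝ} (hg : ∀ x y, g (x + y) ≤ g x + g y + C)
    (hN : ∀ z, Tendsto (fun ε : ℝ => ε * g (ε⁻¹ • z)) (𝓝[>] 0) (𝓝 (N z))) (x y : X) :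
    N (x + y) ≤ N x + N y := by
  have hid : Tendsto (fun ε : ℝ => ε) (𝓝[>] 0) (𝓝 0) := nhdsWithin_le_nhds
  have hlim := ((hN x).add (hN y)).add (hid.mul_const C)
  rw [zero_mul, add_zero] at hlim
  refine le_of_tendsto_of_tendsto (hN (x + y)) hlim ?_
  filter_upwards [self_mem_nhdsWithin] with ε hε
  rw [smul_add, ← mul_add, ← mul_add]
  exact mul_le_mul_of_nonneg_left (hg _ _) (le_of_lt hε)

lemma convexOn_of_sublinear (hsmul : ∀ c : ℝ, 0 ≤ c → ∀ z, N (c • z) = c * N z)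
    (hadd : ∀ x y, N (x + y) ≤ N x + N y) : ConvexOn ℝ univ N := by
  refine ⟨convex_univ, fun x _ y _ a b ha hb _ => ?_⟩
  rw [smul_eq_mul, smul_eq_mul, ← hsmul a ha, ← hsmul b hb]
  exact hadd _ _

end StableNorm

section Periods

lemma periodic_of_mem_span_int {X β : Type*} [AddCommGroup X] {f : X → β} {s : Set X}
    (hf : ∀ v ∈ s, Function.Periodic f v) {v : X} (hv : v ∈ Submodule.span ℤ s) :
    Function.Periodic f v := by
  induction hv using Submodule.span_induction with
  | mem v hv => exact hf v hv
  | zero => exact fun x => by rw [add_zero]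
  | add v w _ _ hv hw => exact hv.add_period hw
  | smul k v _ hv => exact hv.zsmul k

lemma exists_period_norm_sub_le {X : Type*} [NormedAddCommGroup X] [NormedSpace ℝ X]
    {ι β : Type*} [Fintype ι] (b : Module.Basis ι ℝ X) {f : X → β}
    (hf : ∀ i, Function.Periodic f (b i)) (x : X) :
    ∃ v, Function.Periodic f v ∧ ‖x - v‖ ≤ ∑ i, ‖b i‖ := by
  refine ⟨ZSpan.floor b x, ?_, ZSpan.norm_fract_le b x⟩
  exact periodic_of_mem_span_int (Set.forall_mem_range.2 hf) (ZSpan.floor b x).2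

end Periods

section Energy

open Set Topology

variable {X : Type*} [NormedAddCommGroup X] [NormedSpace ℝ X]

/-- The energy on `[0, L]` of a path `γ` with velocity `γ'`, for the conformal factor `f`; the
Jacobi energy is the case `f = 2 * (E - V)`. The velocity is a separate argument so that the
derivative is never a junk value. -/
noncomputable def pathEnergy (f : X → ℝ) (γ γ' : ℝ → X) (L : ℝ) : ℝ :=
  ∫ s in (0 : ℝ)..L, f (γ s) * ‖γ' s‖ ^ 2

/-- The energies of the `C¹` paths from `p` to `q` parametrized by `[0, 1]`. -/
def pathEnergies (f : X → ℝ) (p q : X) : Set ℝ :=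
  {a : ℝ | ∃ γ γ' : ℝ → X, (∀ s ∈ Icc (0 : ℝ) 1, HasDerivAt γ (γ' s) s) ∧
    ContinuousOn γ' (Icc (0 : ℝ) 1) ∧ γ 0 = p ∧ γ 1 = q ∧ a = pathEnergy f γ γ' 1}

/-- The least energy needed to travel from `p` to `q` in unit time. -/
noncomputable def minEnergy (f : X → ℝ) (p q : X) : ℝ :=
  sInf (pathEnergies f p q)

/-- The distance of the Jacobi metric with conformal factor `f`, obtained from the energy rather
than from the length functional. -/
noncomputable def jacobiDist (f : X → ℝ) (p q : X) : ℝ :=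
  √(minEnergy f p q)

/-- `γ` is a `C¹` path on the whole line with velocity `γ'` that rests at `p` up to time `0` and at
`q` from time `L` on. Such paths can be glued without losing regularity. -/
structure IsRestPath (γ γ' : ℝ → X) (L : ℝ) (p q : X) : Prop where
  hasDerivAt : ∀ s, HasDerivAt γ (γ' s) s
  continuous_deriv : Continuous γ'
  eq_left : ∀ s ≤ 0, γ s = p
  eq_right : ∀ s, L ≤ s → γ s = q

variable {f : X → ℝ} {p q r : X} {γ γ' : ℝ → X}

lemma minEnergy_le_of_mem (hf : ∀ x, 0 ≤ f x) {a : ℝ} (ha : a ∈ pathEnergies f p q) :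
    minEnergy f p q ≤ a := by
  refine csInf_le ⟨0, ?_⟩ ha
  rintro _ ⟨γ, γ', -, -, -, -, rfl⟩
  exact integral_nonneg zero_le_one fun s _ => mul_nonneg (hf _) (by positivity)

lemma pathEnergy_segment_mem (f : X → ℝ) (p q : X) :
    pathEnergy f (fun s => p + s • (q - p)) (fun _ => q - p) 1 ∈ pathEnergies f p q := by
  refine ⟨_, _, fun s _ => ?_, continuousOn_const, by simp, by simp, rfl⟩
  simpa using ((hasDerivAt_id s).smul_const (q - p)).const_add p

lemma pathEnergies_nonempty (f : X → ℝ) (p q : X) : (pathEnergies f p q).Nonempty :=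
  ⟨_, pathEnergy_segment_mem f p q⟩

lemma continuousOn_integrand_pathEnergy (hf : Continuous f) {s : Set ℝ}
    (hγ : ∀ t ∈ s, HasDerivAt γ (γ' t) t) (hγ' : ContinuousOn γ' s) :
    ContinuousOn (fun t => f (γ t) * ‖γ' t‖ ^ 2) s :=
  (hf.comp_continuousOn fun t ht => (hγ t ht).continuousAt.continuousWithinAt).mul (hγ'.norm.pow 2)

lemma minEnergy_le (hf : Continuous f) (hf0 : ∀ x, 0 ≤ f x) {M : ℝ} (hM : ∀ x, f x ≤ M)
    (p q : X) : minEnergy f p q ≤ M * ‖q - p‖ ^ 2 :=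
  calc minEnergy f p q ≤ ∫ s in (0 : ℝ)..1, f (p + s • (q - p)) * ‖q - p‖ ^ 2 :=
        minEnergy_le_of_mem hf0 (pathEnergy_segment_mem f p q)
    _ ≤ ∫ _ in (0 : ℝ)..1, M * ‖q - p‖ ^ 2 := by
        refine integral_mono_on zero_le_one (Continuous.intervalIntegrable (by fun_prop) _ _)
          intervalIntegrable_const fun s _ => ?_
        exact mul_le_mul_of_nonneg_right (hM _) (by positivity)
    _ = M * ‖q - p‖ ^ 2 := by simp

-- A norming functional `ℓ` for `q - p` linearizes the energy: `2 * L * ℓ v - L ^ 2 ≤ ‖v‖ ^ 2`,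
-- where `L = ‖q - p‖`, and the left-hand side integrates to `L ^ 2` along any path.
lemma le_minEnergy (hf : Continuous f) {m : ℝ} (hm0 : 0 ≤ m) (hm : ∀ x, m ≤ f x) (p q : X) :
    m * ‖q - p‖ ^ 2 ≤ minEnergy f p q := by
  refine le_csInf (pathEnergies_nonempty f p q) ?_
  rintro _ ⟨γ, γ', hγ, hγ', rfl, rfl, rfl⟩
  obtain ⟨ℓ, hℓ, hℓpq⟩ := exists_dual_vector'' ℝ (γ 1 - γ 0)
  rw [RCLike.ofReal_real_eq_id, id_eq] at hℓpq
  set L := ‖γ 1 - γ 0‖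
  have tangent_le : ∀ v, 2 * L * ℓ v - L ^ 2 ≤ ‖v‖ ^ 2 := fun v => by
    have hv : |ℓ v| ≤ ‖v‖ := by simpa using ℓ.le_of_opNorm_le hℓ v
    nlinarith [sq_nonneg (ℓ v - L), sq_le_sq₀ (abs_nonneg (ℓ v)) (norm_nonneg v) |>.2 hv,
      sq_abs (ℓ v)]
  have hint : IntervalIntegrable (fun s => m * (2 * L * ℓ (γ' s) - L ^ 2))
      MeasureTheory.volume 0 1 :=
    ContinuousOn.intervalIntegrable_of_Icc zero_le_one (by fun_prop)
  calc m * L ^ 2 = ∫ s in (0 : ℝ)..1, m * (2 * L * ℓ (γ' s) - L ^ 2) := by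
        have hderiv : ∀ s ∈ uIcc (0 : ℝ) 1, HasDerivAt
            (fun s => m * (2 * L * ℓ (γ s) - s * L ^ 2)) (m * (2 * L * ℓ (γ' s) - L ^ 2)) s := by
          intro s hs
          rw [uIcc_of_le zero_le_one] at hs
          simpa using (((ℓ.hasFDerivAt.comp_hasDerivAt s (hγ s hs)).const_mul (2 * L)).sub
            ((hasDerivAt_id s).mul_const (L ^ 2))).const_mul m
        rw [integral_eq_sub_of_hasDerivAt hderiv hint]
        rw [map_sub] at hℓpq
        linear_combination (-2 * m * L) * hℓpq
    _ ≤ pathEnergy f γ γ' 1 := by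
        have hcont := continuousOn_integrand_pathEnergy hf hγ hγ'
        refine integral_mono_on zero_le_one hint
          (hcont.intervalIntegrable_of_Icc zero_le_one) fun s _ => ?_
        exact (mul_le_mul_of_nonneg_left (tangent_le _) hm0).trans
          (mul_le_mul_of_nonneg_right (hm _) (by positivity))

namespace IsRestPath

variable {L : ℝ}

lemma continuous (h : IsRestPath γ γ' L p q) : Continuous γ :=
  continuous_iff_continuousAt.2 fun s => (h.hasDerivAt s).continuousAt

lemma deriv_left (h : IsRestPath γ γ' L p q) {s : ℝ} (hs : s ≤ 0) : γ' s = 0 :=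
  (uniqueDiffWithinAt_Iic s).eq_deriv _ (h.hasDerivAt s).hasDerivWithinAt <|
    (hasDerivWithinAt_const s (Iic s) p).congr (fun _ ht => h.eq_left _ (le_trans ht hs))
      (h.eq_left s hs)

lemma deriv_right (h : IsRestPath γ γ' L p q) {s : ℝ} (hs : L ≤ s) : γ' s = 0 :=
  (uniqueDiffWithinAt_Ici s).eq_deriv _ (h.hasDerivAt s).hasDerivWithinAt <|
    (hasDerivWithinAt_const s (Ici s) q).congr (fun _ ht => h.eq_right _ (le_trans hs ht))
      (h.eq_right s hs)

lemma intervalIntegrable_integrand (h : IsRestPath γ γ' L p q) (hf : Continuous f) (a b : ℝ) :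
    IntervalIntegrable (fun s => f (γ s) * ‖γ' s‖ ^ 2) MeasureTheory.volume a b :=
  ContinuousOn.intervalIntegrable <|
    continuousOn_integrand_pathEnergy hf (fun s _ => h.hasDerivAt s) h.continuous_deriv.continuousOn

lemma pathEnergy_mem (h : IsRestPath γ γ' 1 p q) : pathEnergy f γ γ' 1 ∈ pathEnergies f p q :=
  ⟨γ, γ', fun s _ => h.hasDerivAt s, h.continuous_deriv.continuousOn, h.eq_left 0 le_rfl,
    h.eq_right 1 le_rfl, rfl⟩

lemma rescale {k : ℝ} (hk : 0 < k) (h : IsRestPath γ γ' (k * L) p q) :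
    IsRestPath (fun s => γ (k * s)) (fun s => k • γ' (k * s)) L p q where
  hasDerivAt s := by
    have hmul : HasDerivAt (fun s : ℝ => k * s) k s := by simpa using (hasDerivAt_id s).const_mul k
    exact (h.hasDerivAt (k * s)).scomp s hmul
  continuous_deriv := by
    have := h.continuous_deriv
    fun_prop
  eq_left s hs := h.eq_left _ (mul_nonpos_of_nonneg_of_nonpos hk.le hs)
  eq_right s hs := h.eq_right _ (mul_le_mul_of_nonneg_left hs hk.le)

lemma concat {α α' β β' : ℝ → X} {u v : ℝ} (hu : 0 ≤ u) (hv : 0 ≤ v)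
    (hα : IsRestPath α α' u p q) (hβ : IsRestPath β β' v q r) :
    IsRestPath (fun s => α s + (β (s - u) - q)) (fun s => α' s + β' (s - u)) (u + v) p r where
  hasDerivAt s :=
    (hα.hasDerivAt s).add (((hβ.hasDerivAt (s - u)).comp_sub_const s u).sub_const q)
  continuous_deriv := by
    have := hα.continuous_deriv
    have := hβ.continuous_deriv
    fun_prop
  eq_left s hs := by rw [hα.eq_left s hs, hβ.eq_left _ (by linarith), sub_self, add_zero]
  eq_right s hs := by
    rw [hα.eq_right s (by linarith), hβ.eq_right _ (by linarith), add_sub_cancel]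

end IsRestPath

lemma pathEnergy_rescale (f : X → ℝ) (γ γ' : ℝ → X) (k L : ℝ) :
    pathEnergy f (fun s => γ (k * s)) (fun s => k • γ' (k * s)) L
      = k * pathEnergy f γ γ' (k * L) := by
  have hsubst := mul_integral_comp_mul_left (a := 0) (b := L) (c := k)
    (f := fun s => f (γ s) * ‖γ' s‖ ^ 2)
  rw [mul_zero] at hsubst
  rw [pathEnergy, pathEnergy, ← hsubst, ← integral_const_mul, ← integral_const_mul]
  refine integral_congr fun s _ => ?_
  simp only [norm_smul, norm_eq_abs, mul_pow, sq_abs]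
  ring

lemma pathEnergy_concat (hf : Continuous f) {α α' β β' : ℝ → X} {u v : ℝ} (hu : 0 ≤ u) (hv : 0 ≤ v)
    (hα : IsRestPath α α' u p q) (hβ : IsRestPath β β' v q r) :
    pathEnergy f (fun s => α s + (β (s - u) - q)) (fun s => α' s + β' (s - u)) (u + v)
      = pathEnergy f α α' u + pathEnergy f β β' v := by
  set γ : ℝ → X := fun s => α s + (β (s - u) - q)
  set γ' : ℝ → X := fun s => α' s + β' (s - u)
  have hγ : IsRestPath γ γ' (u + v) p r := hα.concat hu hv hβ
  have hint := hγ.intervalIntegrable_integrand hf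
  have first : ∫ s in (0 : ℝ)..u, f (γ s) * ‖γ' s‖ ^ 2 = pathEnergy f α α' u := by
    refine integral_congr fun s hs => ?_
    rw [uIcc_of_le hu] at hs
    have hsu : s - u ≤ 0 := by linarith [hs.2]
    simp only [γ, γ', hβ.eq_left _ hsu, hβ.deriv_left hsu, sub_self, add_zero]
  have second : ∫ s in u..(u + v), f (γ s) * ‖γ' s‖ ^ 2 = pathEnergy f β β' v := by
    have hshift := integral_comp_sub_right (a := u) (b := u + v)
      (fun s => f (β s) * ‖β' s‖ ^ 2) u
    rw [sub_self, add_sub_cancel_left] at hshift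
    rw [pathEnergy, ← hshift]
    refine integral_congr fun s hs => ?_
    rw [uIcc_of_le (by linarith)] at hs
    simp only [γ, γ', hα.eq_right s hs.1, hα.deriv_right hs.1, zero_add, add_sub_cancel]
  rw [pathEnergy, ← integral_add_adjacent_intervals (hint 0 u) (hint u (u + v)), first, second]

lemma exists_continuous_plateau {c : ℝ} (hc : 1 < c) :
    ∃ w : ℝ → ℝ, Continuous w ∧ (∀ s, w s ∈ Icc 0 c) ∧ (∀ s ∉ Ioo (0 : ℝ) 1, w s = 0) ∧
      ∫ s in (0 : ℝ)..1, w s = 1 := by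
  set δ := (1 - c⁻¹) / 2
  have hc' : c⁻¹ < 1 := inv_lt_one_of_one_lt₀ hc
  have hc0 : 0 < c⁻¹ := inv_pos.2 (by linarith)
  have hδ : 0 < δ := by simp only [δ]; linarith
  have hδ' : δ ≤ 1 - δ := by simp only [δ]; linarith
  have hdisj : Disjoint (Ioo (0 : ℝ) 1)ᶜ (Icc δ (1 - δ)) :=
    disjoint_compl_left_iff_subset.2 (Icc_subset_Ioo hδ (by linarith))
  obtain ⟨χ, hχ0, hχ1, hχ⟩ :=
    exists_continuous_zero_one_of_isClosed isOpen_Ioo.isClosed_compl isClosed_Icc hdisj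
  set I := ∫ s in (0 : ℝ)..1, χ s
  have hI : c⁻¹ ≤ I :=
    calc c⁻¹ = ∫ s in δ..(1 - δ), χ s := by
          rw [integral_congr (g := fun _ => (1 : ℝ)) fun s hs => hχ1 (uIcc_of_le hδ' ▸ hs),
            integral_const, smul_eq_mul, mul_one]
          simp only [δ]
          ring
      _ ≤ I := integral_mono_interval hδ.le hδ' (by linarith)
          (Eventually.of_forall fun s => (hχ s).1) (χ.continuous.intervalIntegrable 0 1)
  have hI0 : 0 < I := hc0.trans_le hI
  refine ⟨fun s => χ s / I, by fun_prop, fun s => ⟨div_nonneg (hχ s).1 hI0.le, ?_⟩,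
    fun s hs => ?_, ?_⟩
  · calc χ s / I ≤ 1 / c⁻¹ := div_le_div₀ zero_le_one (hχ s).2 hc0 hI
      _ = c := by rw [one_div, inv_inv]
  · simp only [hχ0 hs, Pi.zero_apply, zero_div]
  · rw [integral_div, div_self hI0.ne']

lemma exists_isRestPath_real {c : ℝ} (hc : 1 < c) :
    ∃ ψ w : ℝ → ℝ, IsRestPath ψ w 1 0 1 ∧ (∀ s, w s ∈ Icc 0 c) ∧ ∀ s, ψ s ∈ Icc (0 : ℝ) 1 := by
  obtain ⟨w, hw, hwc, hw0, hw1⟩ := exists_continuous_plateau hc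
  have hint : ∀ a b, IntervalIntegrable w MeasureTheory.volume a b := hw.intervalIntegrable
  set ψ : ℝ → ℝ := fun s => ∫ u in (0 : ℝ)..s, w u
  have hψ : IsRestPath ψ w 1 0 1 :=
    { hasDerivAt := fun s => hw.integral_hasStrictDerivAt 0 s |>.hasDerivAt
      continuous_deriv := hw
      eq_left := fun s hs => by
        refine (integral_congr fun u hu => ?_).trans integral_zero
        exact hw0 u fun h => h.1.not_ge (uIcc_of_ge hs ▸ hu).2
      eq_right := fun s hs => by
        have htail : ∫ u in (1 : ℝ)..s, w u = 0 := by
          refine (integral_congr fun u hu => ?_).trans integral_zero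
          exact hw0 u fun h => h.2.not_ge (uIcc_of_le hs ▸ hu).1
        simp only [ψ]
        rw [← integral_add_adjacent_intervals (hint 0 1) (hint 1 s), hw1, htail, add_zero] }
  have hmono : Monotone ψ := monotone_of_hasDerivAt_nonneg hψ.hasDerivAt fun s => (hwc s).1
  refine ⟨ψ, w, hψ, hwc, fun s => ⟨?_, ?_⟩⟩
  · rw [← hψ.eq_left _ (min_le_right s 0)]
    exact hmono (min_le_left s 0)
  · rw [← hψ.eq_right _ (le_max_right s 1)]
    exact hmono (le_max_left s 1)

lemma IsRestPath.reparam {ψ w : ℝ → ℝ} {L : ℝ} (hψ : IsRestPath ψ w L 0 1)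
    (hψI : ∀ s, ψ s ∈ Icc (0 : ℝ) 1) (hγ : ∀ s ∈ Icc (0 : ℝ) 1, HasDerivAt γ (γ' s) s)
    (hγ' : ContinuousOn γ' (Icc 0 1)) :
    IsRestPath (fun s => γ (ψ s)) (fun s => w s • γ' (ψ s)) L (γ 0) (γ 1) where
  hasDerivAt s := (hγ _ (hψI s)).scomp s (hψ.hasDerivAt s)
  continuous_deriv := hψ.continuous_deriv.smul (hγ'.comp_continuous hψ.continuous hψI)
  eq_left s hs := by rw [hψ.eq_left s hs]
  eq_right s hs := by rw [hψ.eq_right s hs]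

lemma pathEnergy_reparam_le (hf : Continuous f) (hf0 : ∀ x, 0 ≤ f x) {ψ w : ℝ → ℝ} {c : ℝ}
    (hψ : IsRestPath ψ w 1 0 1) (hψI : ∀ s, ψ s ∈ Icc (0 : ℝ) 1) (hw : ∀ s, w s ∈ Icc 0 c)
    (hγ : ∀ s ∈ Icc (0 : ℝ) 1, HasDerivAt γ (γ' s) s) (hγ' : ContinuousOn γ' (Icc 0 1)) :
    pathEnergy f (fun s => γ (ψ s)) (fun s => w s • γ' (ψ s)) 1 ≤ c * pathEnergy f γ γ' 1 := by
  set e : ℝ → ℝ := fun s => f (γ s) * ‖γ' s‖ ^ 2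
  have he : ContinuousOn e (Icc 0 1) := continuousOn_integrand_pathEnergy hf hγ hγ'
  have hη := hψ.reparam hψI hγ hγ'
  have hsubst : ∫ s in (0 : ℝ)..1, e (ψ s) * w s = pathEnergy f γ γ' 1 := by
    have := integral_comp_mul_deriv' (a := 0) (b := 1) (g := e) (fun s _ => hψ.hasDerivAt s)
      hψ.continuous_deriv.continuousOn (he.mono (image_subset_iff.2 fun s _ => hψI s))
    rwa [hψ.eq_left 0 le_rfl, hψ.eq_right 1 le_rfl] at this
  rw [← hsubst, ← integral_const_mul]
  refine integral_mono_on zero_le_one (hη.intervalIntegrable_integrand hf _ _)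
    (Continuous.intervalIntegrable ?_ _ _) fun s _ => ?_
  · exact continuous_const.mul ((he.comp_continuous hψ.continuous hψI).mul hψ.continuous_deriv)
  · have he0 : 0 ≤ e (ψ s) * w s := mul_nonneg (mul_nonneg (hf0 _) (by positivity)) (hw s).1
    calc f (γ (ψ s)) * ‖w s • γ' (ψ s)‖ ^ 2 = w s * (e (ψ s) * w s) := by
          simp only [e, norm_smul, norm_eq_abs, mul_pow, sq_abs]
          ring
      _ ≤ c * (e (ψ s) * w s) := mul_le_mul_of_nonneg_right (hw s).2 he0

lemma exists_isRestPath_of_minEnergy_lt (hf : Continuous f) (hf0 : ∀ x, 0 ≤ f x) {A : ℝ}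
    (hA : minEnergy f p q < A) :
    ∃ γ γ' : ℝ → X, IsRestPath γ γ' 1 p q ∧ pathEnergy f γ γ' 1 < A := by
  obtain ⟨_, ⟨γ, γ', hγ, hγ', rfl, rfl, rfl⟩, hlt⟩ :=
    exists_lt_of_csInf_lt (pathEnergies_nonempty f p q) hA
  have hlim : Tendsto (fun c => c * pathEnergy f γ γ' 1) (𝓝[>] 1) (𝓝 (pathEnergy f γ γ' 1)) := by
    simpa using (tendsto_id.mul_const (pathEnergy f γ γ' 1)).mono_left
      (nhdsWithin_le_nhds (a := (1 : ℝ)) (s := Ioi 1))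
  obtain ⟨c, hcA, hc⟩ := ((hlim.eventually_lt_const hlt).and self_mem_nhdsWithin).exists
  obtain ⟨ψ, w, hψ, hw, hψI⟩ := exists_isRestPath_real hc
  exact ⟨_, _, hψ.reparam hψI hγ hγ', (pathEnergy_reparam_le hf hf0 hψ hψI hw hγ hγ').trans_lt hcA⟩

lemma exists_isRestPath_of_jacobiDist_lt (hf : Continuous f) (hf0 : ∀ x, 0 ≤ f x) {L : ℝ}
    (hL : jacobiDist f p q < L) :
    ∃ γ γ' : ℝ → X, IsRestPath γ γ' L p q ∧ pathEnergy f γ γ' L < L := by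
  have hL0 : 0 < L := (Real.sqrt_nonneg _).trans_lt hL
  obtain ⟨γ, γ', hγ, hE⟩ := exists_isRestPath_of_minEnergy_lt hf hf0 ((Real.sqrt_lt' hL0).1 hL)
  rw [← inv_mul_cancel₀ hL0.ne'] at hγ hE
  refine ⟨_, _, hγ.rescale (inv_pos.2 hL0), ?_⟩
  rw [pathEnergy_rescale, inv_mul_lt_iff₀ hL0, ← sq]
  exact hE

lemma IsRestPath.jacobiDist_le (hf0 : ∀ x, 0 ≤ f x) {L : ℝ} (hL : 0 < L)
    (h : IsRestPath γ γ' L p q) (hE : pathEnergy f γ γ' L ≤ L) : jacobiDist f p q ≤ L := by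
  rw [← mul_one L] at h hE
  refine Real.sqrt_le_iff.2 ⟨hL.le, ?_⟩
  calc minEnergy f p q ≤ L * pathEnergy f γ γ' (L * 1) := by
        rw [← pathEnergy_rescale]
        exact minEnergy_le_of_mem hf0 (h.rescale hL).pathEnergy_mem
    _ ≤ L ^ 2 := by
        rw [sq]
        exact mul_le_mul_of_nonneg_left (hE.trans_eq (mul_one L)) hL.le

lemma jacobiDist_triangle (hf : Continuous f) (hf0 : ∀ x, 0 ≤ f x) (p q r : X) :
    jacobiDist f p r ≤ jacobiDist f p q + jacobiDist f q r := by
  refine le_add_of_forall_lt fun u hu v hv => ?_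
  have hu0 : 0 < u := (Real.sqrt_nonneg _).trans_lt hu
  have hv0 : 0 < v := (Real.sqrt_nonneg _).trans_lt hv
  obtain ⟨α, α', hα, hαu⟩ := exists_isRestPath_of_jacobiDist_lt hf hf0 hu
  obtain ⟨β, β', hβ, hβv⟩ := exists_isRestPath_of_jacobiDist_lt hf hf0 hv
  refine (hα.concat hu0.le hv0.le hβ).jacobiDist_le hf0 (add_pos hu0 hv0) ?_
  rw [pathEnergy_concat hf hu0.le hv0.le hα hβ]
  exact (add_lt_add hαu hβv).le

lemma jacobiDist_le_sqrt_mul (hf : Continuous f) (hf0 : ∀ x, 0 ≤ f x) {M : ℝ} (hM : ∀ x, f x ≤ M)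
    (p q : X) : jacobiDist f p q ≤ √M * ‖q - p‖ := by
  rw [← Real.sqrt_sq (norm_nonneg (q - p)), ← Real.sqrt_mul ((hf0 p).trans (hM p))]
  exact Real.sqrt_le_sqrt (minEnergy_le hf hf0 hM p q)

lemma jacobiDist_add_period_le (hf0 : ∀ x, 0 ≤ f x) {v : X} (hv : Function.Periodic f v) (p q : X) :
    jacobiDist f (p + v) (q + v) ≤ jacobiDist f p q := by
  refine Real.sqrt_le_sqrt (le_csInf (pathEnergies_nonempty f p q) ?_)
  rintro _ ⟨γ, γ', hγ, hγ', rfl, rfl, rfl⟩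
  refine minEnergy_le_of_mem hf0 ⟨fun s => γ s + v, γ', fun s hs => (hγ s hs).add_const v, hγ', rfl,
    rfl, ?_⟩
  simp only [pathEnergy, hv _]

lemma sq_mul_mem_pathEnergies_smul {c a : ℝ} (ha : a ∈ pathEnergies (fun x => f (c • x)) p q) :
    c ^ 2 * a ∈ pathEnergies f (c • p) (c • q) := by
  obtain ⟨γ, γ', hγ, hγ', rfl, rfl, rfl⟩ := ha
  refine ⟨fun s => c • γ s, fun s => c • γ' s, fun s hs => (hγ s hs).const_smul c, by fun_prop, rfl,
    rfl, ?_⟩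
  rw [pathEnergy, pathEnergy, ← integral_const_mul]
  refine integral_congr fun s _ => ?_
  simp only [norm_smul, norm_eq_abs, mul_pow, sq_abs]
  ring

open scoped Pointwise in
lemma minEnergy_smul (f : X → ℝ) {c : ℝ} (hc : c ≠ 0) (p q : X) :
    minEnergy f (c • p) (c • q) = c ^ 2 * minEnergy (fun x => f (c • x)) p q := by
  have hset : pathEnergies f (c • p) (c • q) = c ^ 2 • pathEnergies (fun x => f (c • x)) p q := by
    refine Subset.antisymm (fun a ha => ?_) ?_
    · rw [mem_smul_set_iff_inv_smul_mem₀ (pow_ne_zero 2 hc), smul_eq_mul, ← inv_pow]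
      have ha' : a ∈ pathEnergies (fun x => f (c • c⁻¹ • x)) (c • p) (c • q) := by
        simpa only [smul_inv_smul₀ hc] using ha
      simpa only [inv_smul_smul₀ hc] using
        sq_mul_mem_pathEnergies_smul (f := fun x => f (c • x)) ha'
    · rintro _ ⟨a, ha, rfl⟩
      exact sq_mul_mem_pathEnergies_smul ha
  rw [minEnergy, hset, Real.sInf_smul_of_nonneg (sq_nonneg c), smul_eq_mul, minEnergy]

lemma jacobiDist_smul (f : X → ℝ) {c : ℝ} (hc : 0 < c) (p q : X) :
    jacobiDist f (c • p) (c • q) = c * jacobiDist (fun x => f (c • x)) p q := by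
  rw [jacobiDist, minEnergy_smul f hc.ne', Real.sqrt_mul (sq_nonneg c), Real.sqrt_sq hc.le,
    jacobiDist]

lemma jacobiDist_zero_add_le (hf : Continuous f) (hf0 : ∀ x, 0 ≤ f x) {M R : ℝ}
    (hM : ∀ x, f x ≤ M) (hper : ∀ x, ∃ v, Function.Periodic f v ∧ ‖x - v‖ ≤ R) (x y : X) :
    jacobiDist f 0 (x + y) ≤ jacobiDist f 0 x + jacobiDist f 0 y + 2 * √M * R := by
  obtain ⟨v, hv, hvR⟩ := hper x
  have hnear : ∀ a b : X, ‖b - a‖ = ‖x - v‖ → jacobiDist f a b ≤ √M * R := fun a b hab =>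
    (jacobiDist_le_sqrt_mul hf hf0 hM a b).trans
      (mul_le_mul_of_nonneg_left (hab.trans_le hvR) (Real.sqrt_nonneg M))
  have hstart : jacobiDist f x v ≤ √M * R := hnear x v (norm_sub_rev v x)
  have hend : jacobiDist f (y + v) (x + y) ≤ √M * R := hnear _ _ (by congr 1; abel)
  have hmiddle : jacobiDist f v (y + v) ≤ jacobiDist f 0 y := by
    simpa using jacobiDist_add_period_le hf0 hv 0 y
  linarith [jacobiDist_triangle hf hf0 0 x (x + y), jacobiDist_triangle hf hf0 x v (x + y),
    jacobiDist_triangle hf hf0 v (y + v) (x + y)]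

lemma tendsto_mul_jacobiDist {jbar : X → ℝ}
    (hjbar : ∀ z, Tendsto (fun ε : ℝ => minEnergy (fun x => f (ε⁻¹ • x)) 0 z) (𝓝[>] 0) (𝓝 (jbar z)))
    (z : X) : Tendsto (fun ε : ℝ => ε * jacobiDist f 0 (ε⁻¹ • z)) (𝓝[>] 0) (𝓝 √(jbar z)) := by
  refine ((Real.continuous_sqrt.tendsto _).comp (hjbar z)).congr' ?_
  filter_upwards [self_mem_nhdsWithin] with ε hε
  have hscale := jacobiDist_smul f (inv_pos.2 hε) 0 z
  rw [smul_zero] at hscale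
  rw [hscale, mul_inv_cancel_left₀ (ne_of_gt hε), Function.comp_apply, jacobiDist]

theorem gamma_limit_integrand_bounds_general (hf : Continuous f) {m M R : ℝ} (hm0 : 0 ≤ m)
    (hm : ∀ x, m ≤ f x) (hM : ∀ x, f x ≤ M)
    (hper : ∀ x, ∃ v, Function.Periodic f v ∧ ‖x - v‖ ≤ R) {jbar : X → ℝ}
    (hjbar : ∀ z, Tendsto (fun ε : ℝ => minEnergy (fun x => f (ε⁻¹ • x)) 0 z)
      (𝓝[>] 0) (𝓝 (jbar z))) :
    (∀ z, m * ‖z‖ ^ 2 ≤ jbar z ∧ jbar z ≤ M * ‖z‖ ^ 2) ∧ ConvexOn ℝ univ jbar ∧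
      ∀ c : ℝ, 0 ≤ c → ∀ z, jbar (c • z) = c ^ 2 * jbar z := by
  have hf0 : ∀ x, 0 ≤ f x := fun x => hm0.trans (hm x)
  have hscaled : ∀ ε : ℝ, Continuous fun x => f (ε⁻¹ • x) := fun ε => by fun_prop
  have hbounds : ∀ z, m * ‖z‖ ^ 2 ≤ jbar z ∧ jbar z ≤ M * ‖z‖ ^ 2 := fun z =>
    ⟨ge_of_tendsto' (hjbar z) fun ε => by
        simpa using le_minEnergy (hscaled ε) hm0 (fun x => hm _) 0 z,
      le_of_tendsto' (hjbar z) fun ε => by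
        simpa using minEnergy_le (hscaled ε) (fun x => hf0 _) (fun x => hM _) 0 z⟩
  have hsq : ∀ z, √(jbar z) ^ 2 = jbar z := fun z =>
    Real.sq_sqrt ((mul_nonneg hm0 (sq_nonneg _)).trans (hbounds z).1)
  have hsmul := fun (c : ℝ) (hc : 0 ≤ c) => rescaledLimit_smul (tendsto_mul_jacobiDist hjbar) hc
  have hadd := rescaledLimit_add_le (jacobiDist_zero_add_le hf hf0 hM hper)
    (tendsto_mul_jacobiDist hjbar)
  refine ⟨hbounds, ?_, fun c hc z => ?_⟩
  · exact ((convexOn_of_sublinear hsmul hadd).pow (fun z _ => Real.sqrt_nonneg _) 2).congr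
      fun z _ => hsq z
  · rw [← hsq, hsmul c hc, mul_pow, hsq]

end Energy

/-- Properties of the Γ-limit integrand `j̄` of the Jacobi energies (Theorem 4.1 and
    the Finsler bounds): `2E‖z‖² ≤ j̄(z) ≤ 2(E − min V)‖z‖²`, `j̄` convex and
    2-homogeneous. -/
theorem gamma_limit_integrand_bounds
    (n : ℕ) (V : EuclideanSpace ℝ (Fin n) → ℝ)
    (hV : Continuous V) (hbdd : ∃ C : ℝ, ∀ x, |V x| ≤ C)
    (hper : ∀ (x : EuclideanSpace ℝ (Fin n)) (i : Fin n),
      V (x + EuclideanSpace.single i 1) = V x)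
    (hmax : IsGreatest (Set.range V) 0)
    (Vmin : ℝ) (hmin : IsLeast (Set.range V) Vmin)
    (E : ℝ) (hE : 0 < E)
    (jbar : EuclideanSpace ℝ (Fin n) → ℝ)
    (hjbar : ∀ z : EuclideanSpace ℝ (Fin n),
      Tendsto (fun ε : ℝ => sInf {a : ℝ |
          ∃ γ γ' : ℝ → EuclideanSpace ℝ (Fin n),
            (∀ s ∈ Set.Icc (0:ℝ) 1, HasDerivAt γ (γ' s) s) ∧
            ContinuousOn γ' (Set.Icc (0:ℝ) 1) ∧ γ 0 = 0 ∧ γ 1 = z ∧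
            a = ∫ s in (0:ℝ)..1, 2 * (E - V (ε⁻¹ • γ s)) * ‖γ' s‖ ^ 2})
        (nhdsWithin 0 (Set.Ioi 0)) (nhds (jbar z))) :
    (∀ z : EuclideanSpace ℝ (Fin n),
        2 * E * ‖z‖ ^ 2 ≤ jbar z ∧ jbar z ≤ 2 * (E - Vmin) * ‖z‖ ^ 2) ∧
      ConvexOn ℝ Set.univ jbar ∧
      ∀ (c : ℝ), 0 ≤ c → ∀ z, jbar (c • z) = c ^ 2 * jbar z := by
  obtain ⟨R, hR⟩ : ∃ R : ℝ, ∀ x, ∃ v, Function.Periodic V v ∧ ‖x - v‖ ≤ R :=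
    ⟨_, exists_period_norm_sub_le (EuclideanSpace.basisFun (Fin n) ℝ).toBasis fun i x => by
      simpa using hper x i⟩
  exact gamma_limit_integrand_bounds_general (f := fun x => 2 * (E - V x)) (by fun_prop)
    (by linarith) (fun x => by linarith [hmax.2 ⟨x, rfl⟩]) (fun x => by linarith [hmin.2 ⟨x, rfl⟩])
    (fun x => (hR x).imp fun v hv => ⟨hv.1.comp fun y => 2 * (E - y), hv.2⟩) hjbar
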